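/- Let ψ : Fin 2 → Fin 2 → Fin n → ℂ be any vector with coefficient matrices A^l = (ψ i j l)_{ij}. Then there exist unitary matrices U, V ∈ U(2) and W ∈ U(n) such that the transformed coefficient matrices B^l, defined by (B^l)_{ij} = ∑_{i',j',l'} U_{i i'} V_{j j'} W_{l l'} ψ i' j' l', satisfy: (B^l)† B^l is a diagonal matrix for every l : Fin n. Moreover, there exist (in general different) unitaries U', V' ∈ U(2) and W' ∈ U(n) such that the correspondingly transformed coefficient matrices B'^l satisfy: B'^l (B'^l)† is diagonal for every l. -/

import Mathlib

open Matrix Finset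

noncomputable section

/-- The coefficient matrices of a `2×2×n` pure state after local unitary basis changes
`U ∈ U(2)`, `V ∈ U(2)`, `W ∈ U(n)` by Alice, Bob and Sapna respectively. -/
def transformedCoeff {n : ℕ} (U V : Matrix (Fin 2) (Fin 2) ℂ)
    (W : Matrix (Fin n) (Fin n) ℂ) (ψ : Fin 2 → Fin 2 → Fin n → ℂ) (l : Fin n) :
    Matrix (Fin 2) (Fin 2) ℂ :=
  fun i j => ∑ i', ∑ j', ∑ l', U i i' * V j j' * W l l' * ψ i' j' l'

theorem two_by_two_balance (p q r : ℂ) : ∃ x y : ℂ, x * star x + y * star y = 1 ∧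
    p * (x * star x - y * star y) + q * (x * star y) + r * (y * star x) = 0 := by
  by_cases hp : p = 0
  · exact ⟨1, 0, by simp, by simp [hp]⟩
  -- a unit complex number `z` making `q * star z + r * z` a real multiple of `p`
  obtain ⟨z, s, hz, hs⟩ : ∃ (z : ℂ) (s : ℝ), z * star z = 1 ∧ q * star z + r * z = s * p := by
    set a : ℂ := q / p with ha
    set b : ℂ := r / p with hb
    have key : ∃ z : ℂ, z * star z = 1 ∧ (a * star z + b * z).im = 0 := by
      -- Im = z.re * (a.im + b.im) + z.im * (b.re - a.re)
      by_cases h : (Complex.mk (a.re - b.re) (a.im + b.im)) = 0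
      · refine ⟨1, by simp, ?_⟩
        have h2 := congrArg Complex.im h
        simp at h2 ⊢
        exact h2
      · set w : ℂ := Complex.mk (a.re - b.re) (a.im + b.im) with hw
        have hn : (‖w‖ : ℝ) ≠ 0 := by simpa using h
        have hn' : ((‖w‖ : ℝ) : ℂ) ≠ 0 := by exact_mod_cast hn
        refine ⟨((‖w‖⁻¹ : ℝ) : ℂ) * w, ?_, ?_⟩
        · have := Complex.mul_conj' w
          simp only [star_mul', Complex.star_def, Complex.conj_ofReal]
          push_cast
          rw [show (‖w‖ : ℂ)⁻¹ * w * ((‖w‖ : ℂ)⁻¹ * (starRingEnd ℂ) w)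
            = (‖w‖ : ℂ)⁻¹ ^ 2 * (w * (starRingEnd ℂ) w) by ring, this]
          field_simp
        · have e1 : w.re = a.re - b.re := rfl
          have e2 : w.im = a.im + b.im := rfl
          simp only [Complex.add_im, Complex.mul_im, Complex.star_def, Complex.conj_re,
            Complex.conj_im, Complex.mul_re, Complex.ofReal_re, Complex.ofReal_im, e1, e2]
          ring
    obtain ⟨z, hz, him⟩ := key
    refine ⟨z, (a * star z + b * z).re, hz, ?_⟩
    have : (((a * star z + b * z).re : ℝ) : ℂ) = a * star z + b * z := by
      apply Complex.ext <;> simp only [Complex.ofReal_re, Complex.ofReal_im, him]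
    rw [this, ha, hb]
    field_simp
  -- now choose real weights
  obtain ⟨α, β, h1, h2⟩ : ∃ α β : ℝ, α ^ 2 + β ^ 2 = 1 ∧ α ^ 2 - β ^ 2 + s * (α * β) = 0 := by
    set t : ℝ := (-s + √(s ^ 2 + 4)) / 2 with ht
    have hsq : √(s ^ 2 + 4) ^ 2 = s ^ 2 + 4 := Real.sq_sqrt (by positivity)
    have htt : t ^ 2 - 1 + s * t = 0 := by rw [ht]; nlinarith
    have hm : √(1 + t ^ 2) ^ 2 = 1 + t ^ 2 := Real.sq_sqrt (by positivity)
    have hm0 : √(1 + t ^ 2) ≠ 0 := by positivity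
    refine ⟨t / √(1 + t ^ 2), 1 / √(1 + t ^ 2), ?_, ?_⟩
    · field_simp; rw [hm]; ring
    · field_simp; linarith
  have h1c : (α : ℂ) ^ 2 + (β : ℂ) ^ 2 = 1 := by exact_mod_cast h1
  have h2c : (α : ℂ) ^ 2 - (β : ℂ) ^ 2 + s * (α * β) = 0 := by exact_mod_cast h2
  refine ⟨α, β * z, ?_, ?_⟩
  · simp only [star_mul', Complex.star_def, Complex.conj_ofReal] at hz ⊢
    linear_combination h1c + (β : ℂ) ^ 2 * hz
  · simp only [star_mul', Complex.star_def, Complex.conj_ofReal] at hz hs ⊢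
    linear_combination p * h2c + (α * β : ℂ) * hs - p * (β : ℂ) ^ 2 * hz

theorem avg_lt (a b : ℂ) (h : a ≠ b) :
    2 * Complex.normSq ((a + b) / 2) < Complex.normSq a + Complex.normSq b := by
  have h1 : 0 < Complex.normSq (a - b) := by
    rw [Complex.normSq_pos]; exact sub_ne_zero.mpr h
  have h2 : Complex.normSq ((a + b) / 2) = Complex.normSq (a + b) / 4 := by
    rw [Complex.normSq_div]; norm_num [Complex.normSq_apply]
  rw [h2]
  simp only [Complex.normSq_apply, Complex.add_re, Complex.add_im, Complex.sub_re,
    Complex.sub_im] at *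
  nlinarith

theorem isCompact_rows (n : ℕ) :
    IsCompact {W : Fin n → Fin n → ℂ | ∀ k l, W k ⬝ᵥ star (W l) = if k = l then 1 else 0} := by
  have hc : IsCompact (Set.pi Set.univ (fun _ : Fin n => Set.pi Set.univ
      (fun _ : Fin n => Metric.closedBall (0 : ℂ) 1))) :=
    isCompact_univ_pi fun _ => isCompact_univ_pi fun _ => isCompact_closedBall _ _
  refine hc.of_isClosed_subset ?_ ?_
  · simp only [Set.ofPred_forall]
    refine isClosed_iInter fun k => isClosed_iInter fun l => isClosed_eq ?_ continuous_const
    simp only [dotProduct, Pi.star_apply]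
    fun_prop
  · intro W hW k _ l _
    have hu : (Matrix.of W) ∈ Matrix.unitaryGroup (Fin n) ℂ := by
      rw [Matrix.mem_unitaryGroup_iff]
      ext k l
      have := hW k l
      rw [Matrix.one_apply, ← this]
      simp [Matrix.mul_apply, dotProduct, Matrix.star_apply]
    have := entry_norm_bound_of_unitary hu k l
    simpa using this

theorem exists_zero_diag (n : ℕ) (M : Matrix (Fin n) (Fin n) ℂ) (hM : M.trace = 0) :
    ∃ W ∈ Matrix.unitaryGroup (Fin n) ℂ, ∀ l, (W l) ⬝ᵥ (M *ᵥ star (W l)) = 0 := by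
  set S := {W : Fin n → Fin n → ℂ | ∀ k l, W k ⬝ᵥ star (W l) = if k = l then 1 else 0} with hS
  let d : (Fin n → Fin n → ℂ) → Fin n → ℂ := fun W l => W l ⬝ᵥ (M *ᵥ star (W l))
  let f : (Fin n → Fin n → ℂ) → ℝ := fun W => ∑ l, Complex.normSq (d W l)
  have hf : Continuous f := by
    simp only [f, d, dotProduct, Matrix.mulVec, Pi.star_apply]
    refine continuous_finsetSum _ fun l _ => Complex.continuous_normSq.comp ?_
    fun_prop
  have hne : S.Nonempty := by
    refine ⟨(1 : Matrix (Fin n) (Fin n) ℂ), fun k l => ?_⟩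
    simp [dotProduct, Matrix.one_apply, eq_comm]
  obtain ⟨W, hW, hmin⟩ := (isCompact_rows n).exists_isMinOn hne hf.continuousOn
  have hu : (Matrix.of W) ∈ Matrix.unitaryGroup (Fin n) ℂ := by
    rw [Matrix.mem_unitaryGroup_iff]
    ext k l
    have := hW k l
    rw [Matrix.one_apply, ← this]
    simp [Matrix.mul_apply, dotProduct, Matrix.star_apply]
  refine ⟨Matrix.of W, hu, ?_⟩
  have htr : ∑ l, d W l = 0 := by
    have h1 : ∑ l, d W l = (Matrix.of W * (M * star (Matrix.of W))).trace := by
      simp only [Matrix.trace, Matrix.diag, d]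
      refine Finset.sum_congr rfl fun l _ => ?_
      simp [Matrix.mul_apply, dotProduct, Matrix.mulVec, Matrix.star_apply]
    rw [h1, Matrix.trace_mul_comm, Matrix.mul_assoc, Matrix.mem_unitaryGroup_iff'.mp hu,
      Matrix.mul_one, hM]
  have heq : ∀ i j, d W i = d W j := by
    intro i j
    by_contra hij
    have hne : i ≠ j := fun h => hij (by rw [h])
    obtain ⟨x, y, hxy, hbal⟩ := two_by_two_balance ((d W i - d W j) / 2)
      (W i ⬝ᵥ (M *ᵥ star (W j))) (W j ⬝ᵥ (M *ᵥ star (W i)))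
    let W' : Fin n → Fin n → ℂ := fun k => if k = i then x • W i + y • W j
      else if k = j then (-star y) • W i + (star x) • W j else W k
    have hWi : W' i = x • W i + y • W j := by simp [W']
    have hWj : W' j = (-star y) • W i + (star x) • W j := by simp [W', hne.symm]
    have hWk : ∀ k, k ≠ i → k ≠ j → W' k = W k := by
      intro k h1 h2; simp [W', h1, h2]
    have hW0 : ∀ k l, W k ⬝ᵥ star (W l) = if k = l then 1 else 0 := hW
    have hW' : W' ∈ S := by
      intro k l
      by_cases hki : k = i
      · by_cases hli : l = i
        · subst hki hli
          rw [hWi]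
          simp [dotProduct_add, add_dotProduct, hW0, hne, hne.symm]
          simpa [mul_comm] using hxy
        · by_cases hlj : l = j
          · subst hki hlj
            rw [hWi, hWj]
            simp [dotProduct_add, add_dotProduct, hW0, hne, hne.symm]
            ring
          · subst hki
            rw [hWi, hWk l hli hlj]
            simp [dotProduct_add, add_dotProduct, hW0, Ne.symm hli, Ne.symm hlj]
      · by_cases hkj : k = j
        · by_cases hli : l = i
          · subst hkj hli
            rw [hWi, hWj]
            simp [dotProduct_add, add_dotProduct, hW0, hne, hne.symm]
            ring
          · by_cases hlj : l = j
            · subst hkj hlj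
              rw [hWj]
              simp [dotProduct_add, add_dotProduct, hW0, hne, hne.symm]
              simp at hxy
              linear_combination hxy
            · subst hkj
              rw [hWj, hWk l hli hlj]
              simp [dotProduct_add, add_dotProduct, hW0, Ne.symm hli, Ne.symm hlj]
        · by_cases hli : l = i
          · subst hli
            rw [hWi, hWk k hki hkj]
            simp [dotProduct_add, hW0, hki, hkj]
          · by_cases hlj : l = j
            · subst hlj
              rw [hWj, hWk k hki hkj]
              simp [dotProduct_add, hW0, hki, hkj]
            · rw [hWk k hki hkj, hWk l hli hlj, hW0]
    have hdi : d W' i = (d W i + d W j) / 2 := by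
      simp only [d] at hbal ⊢
      rw [hWi]
      simp only [star_add, star_smul, Matrix.mulVec_add, Matrix.mulVec_smul, dotProduct_add,
        add_dotProduct, smul_dotProduct, dotProduct_smul, smul_eq_mul]
      linear_combination hbal + (W i ⬝ᵥ M *ᵥ star (W i) + W j ⬝ᵥ M *ᵥ star (W j)) / 2 * hxy
    have hdj : d W' j = (d W i + d W j) / 2 := by
      simp only [d] at hbal ⊢
      rw [hWj]
      simp only [star_add, star_smul, star_neg, star_star, Matrix.mulVec_add, Matrix.mulVec_smul,
        dotProduct_add, add_dotProduct, smul_dotProduct, dotProduct_smul, smul_eq_mul]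
      linear_combination -hbal + (W i ⬝ᵥ M *ᵥ star (W i) + W j ⬝ᵥ M *ᵥ star (W j)) / 2 * hxy
    have hle : f W ≤ f W' := hmin hW'
    have hsplit : ∀ g : Fin n → ℝ, ∑ l, g l = g i + (g j + ∑ l ∈ (univ.erase i).erase j, g l) := by
      intro g
      rw [Finset.add_sum_erase _ _ (by simp [hne.symm]), Finset.add_sum_erase _ _ (by simp)]
    simp only [f] at hle
    rw [hsplit, hsplit (fun l => Complex.normSq (d W' l)), hdi, hdj] at hle
    have hrest : ∑ l ∈ (univ.erase i).erase j, Complex.normSq (d W' l)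
        = ∑ l ∈ (univ.erase i).erase j, Complex.normSq (d W l) := by
      refine Finset.sum_congr rfl fun l hl => ?_
      simp only [Finset.mem_erase] at hl
      simp only [d, hWk l hl.2.1 hl.1]
    rw [hrest] at hle
    have := avg_lt _ _ hij
    linarith
  intro l
  have : (n : ℂ) * d W l = 0 := by
    rw [← htr, Finset.sum_congr rfl (fun k _ => heq k l)]
    simp
  have hn : (n : ℂ) ≠ 0 := by
    have := l.pos
    exact_mod_cast this.ne'
  exact (mul_eq_zero.mp this).resolve_left hn

theorem first_part (n : ℕ) (ψ : Fin 2 → Fin 2 → Fin n → ℂ) :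
    ∃ (U V : Matrix (Fin 2) (Fin 2) ℂ) (W : Matrix (Fin n) (Fin n) ℂ),
      U ∈ Matrix.unitaryGroup (Fin 2) ℂ ∧ V ∈ Matrix.unitaryGroup (Fin 2) ℂ ∧
      W ∈ Matrix.unitaryGroup (Fin n) ℂ ∧
      ∀ l : Fin n, ((transformedCoeff U V W ψ l)ᴴ * transformedCoeff U V W ψ l).IsDiag := by
  -- Bob's amplitudes as a matrix and his reduced density matrix
  let P : Matrix (Fin 2) (Fin 2 × Fin n) ℂ := fun j il => ψ il.1 j il.2
  have hρ : (P * Pᴴ).IsHermitian := Matrix.isHermitian_mul_conjTranspose_self P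
  obtain ⟨V, hV, hdiag⟩ : ∃ V ∈ Matrix.unitaryGroup (Fin 2) ℂ,
      ((V * P) * (V * P)ᴴ) 0 1 = 0 := by
    refine ⟨star (hρ.eigenvectorUnitary : Matrix (Fin 2) (Fin 2) ℂ),
      Unitary.star_mem hρ.eigenvectorUnitary.2, ?_⟩
    have h := hρ.conjStarAlgAut_star_eigenvectorUnitary
    rw [Unitary.conjStarAlgAut_star_apply] at h
    have h2 : star (hρ.eigenvectorUnitary : Matrix (Fin 2) (Fin 2) ℂ) * P *
        (star (hρ.eigenvectorUnitary : Matrix (Fin 2) (Fin 2) ℂ) * P)ᴴ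
        = star (hρ.eigenvectorUnitary : Matrix (Fin 2) (Fin 2) ℂ) * (P * Pᴴ) *
          (hρ.eigenvectorUnitary : Matrix (Fin 2) (Fin 2) ℂ) := by
      rw [Matrix.conjTranspose_mul, Matrix.star_eq_conjTranspose,
        Matrix.conjTranspose_conjTranspose]
      simp only [Matrix.mul_assoc]
    rw [h2, h]
    simp
  let X : Fin 2 → Matrix (Fin n) (Fin 2) ℂ := fun j l i => (V * P) j (i, l)
  obtain ⟨W, hW, hz⟩ := exists_zero_diag n (X 0 * (X 1)ᴴ) (by
    rw [← hdiag]
    simp only [Matrix.trace, Matrix.diag, Matrix.mul_apply (M := X 0),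
      Matrix.mul_apply (M := V * P), Matrix.conjTranspose_apply, X, Fintype.sum_prod_type]
    rw [Finset.sum_comm]
    rfl)
  refine ⟨1, V, W, one_mem _, hV, hW, fun l => ?_⟩
  have hB : ∀ i j, transformedCoeff 1 V W ψ l i j = (W l ᵥ* X j) i := by
    intro i j
    simp only [transformedCoeff, Matrix.vecMul, dotProduct, X, Matrix.one_apply, ite_mul, one_mul, zero_mul]
    rw [Finset.sum_eq_single i (by intro b _ hb; simp [hb.symm]) (by simp)]
    rw [Finset.sum_comm]
    refine Finset.sum_congr rfl fun a _ => ?_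
    have hVP : (V * P) j (i, a)
        = ∑ b, V j b * ψ i b a := rfl
    rw [hVP, Finset.mul_sum]
    refine Finset.sum_congr rfl fun b _ => ?_
    simp only [if_true]
    ring
  have h01 : ∑ i, transformedCoeff 1 V W ψ l i 0 * star (transformedCoeff 1 V W ψ l i 1) = 0 := by
    simp only [hB]
    have := hz l
    rw [← Matrix.mulVec_mulVec, Matrix.dotProduct_mulVec, ← Matrix.star_vecMul] at this
    simpa [dotProduct] using this
  have h10 := congrArg star h01
  intro a b hab
  fin_cases a <;> fin_cases b <;> simp [Matrix.mul_apply, Fin.sum_univ_two] at hab h01 h10 ⊢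
  · linear_combination h10
  · linear_combination h01

theorem exists_local_bases_diagonalizing (n : ℕ) (ψ : Fin 2 → Fin 2 → Fin n → ℂ) :
    (∃ (U V : Matrix (Fin 2) (Fin 2) ℂ) (W : Matrix (Fin n) (Fin n) ℂ),
      U ∈ Matrix.unitaryGroup (Fin 2) ℂ ∧ V ∈ Matrix.unitaryGroup (Fin 2) ℂ ∧
      W ∈ Matrix.unitaryGroup (Fin n) ℂ ∧
      ∀ l : Fin n, ((transformedCoeff U V W ψ l)ᴴ * transformedCoeff U V W ψ l).IsDiag) ∧
    (∃ (U' V' : Matrix (Fin 2) (Fin 2) ℂ) (W' : Matrix (Fin n) (Fin n) ℂ),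
      U' ∈ Matrix.unitaryGroup (Fin 2) ℂ ∧ V' ∈ Matrix.unitaryGroup (Fin 2) ℂ ∧
      W' ∈ Matrix.unitaryGroup (Fin n) ℂ ∧
      ∀ l : Fin n, (transformedCoeff U' V' W' ψ l * (transformedCoeff U' V' W' ψ l)ᴴ).IsDiag) := by
  refine ⟨first_part n ψ, ?_⟩
  obtain ⟨U, V, W, hU, hV, hW, h⟩ := first_part n (fun i j l => ψ j i l)
  refine ⟨V, U, W, hV, hU, hW, fun l => ?_⟩
  have hT : ∀ i j, transformedCoeff V U W ψ l i j
      = transformedCoeff U V W (fun i j l => ψ j i l) l j i := by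
    intro i j
    simp only [transformedCoeff]
    rw [Finset.sum_comm]
    refine Finset.sum_congr rfl fun a _ => Finset.sum_congr rfl fun b _ =>
      Finset.sum_congr rfl fun c _ => ?_
    ring
  intro a b hab
  have := h l hab.symm
  simp only [Matrix.mul_apply, Matrix.conjTranspose_apply, hT] at this ⊢
  rw [← this]
  exact Finset.sum_congr rfl fun k _ => mul_comm _ _
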